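/- (The full current–Virasoro algebra Vir_c ⋉̃_{k0,g}( ĝl(N)_{k1,k2} ⊕̃_{g'} ĝ_k ) of eqs. (3.7) and (4.4) is a Lie algebra.) Let 𝔤 be a finite-dimensional real Lie algebra, B : 𝔤 × 𝔤 → ℝ a symmetric invariant bilinear form (B([X,Y],Z) = B(X,[Y,Z])), and φ_g, φ_{g'} : 𝔤 → ℝ linear functionals vanishing on [𝔤,𝔤]. Fix real constants c, k0, k1, k2, k. Then the bilinear bracket on W ⊕ L gl(N) ⊕ L𝔤 ⊕ ℝC defined by [L_m, L_n] = (m−n) L_{m+n} + (c/12)(m³−m) δ_{m+n,0} C; [L_m, X(n)] = −n X(m+n) + (k0/2) m² δ_{m+n,0} tr(X) C for X ∈ gl(N); [L_m, Y(n)] = −n Y(m+n) + (1/2) m² δ_{m+n,0} φ_g(Y) C for Y ∈ 𝔤; [X(m), X'(n)] = [X,X'](m+n) + m δ_{m+n,0} ( k1 tr(XX') + k2 tr(X) tr(X') ) C for X, X' ∈ gl(N); [Y(m), Y'(n)] = [Y,Y'](m+n) + k m δ_{m+n,0} B(Y,Y') C for Y, Y' ∈ 𝔤; [X(m), Y(n)]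 = −[Y(n), X(m)] = m δ_{m+n,0} tr(X) φ_{g'}(Y) C for X ∈ gl(N), Y ∈ 𝔤; [C, ·] = 0; is antisymmetric and satisfies the Jacobi identity, i.e. it defines a Lie algebra over ℝ. -/

import Mathlib

/-- Underlying vector space `W ⊕ L gl(N) ⊕ L𝔤 ⊕ ℝC` of the full current–Virasoro
algebra `Vir_c ⋉̃_{k₀,g}( ĝl(N)_{k₁,k₂} ⊕̃_{g'} ĝ_k )`. -/
abbrev CurVir (N : ℕ) (𝔤 : Type*) [LieRing 𝔤] [LieAlgebra ℝ 𝔤] : Type _ :=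
  (ℤ →₀ ℝ) × (ℤ →₀ Matrix (Fin N) (Fin N) ℝ) × (ℤ →₀ 𝔤) × ℝ

/-- The bracket of eqs. (3.7) and (4.4), defined bilinearly by
`[L_m, L_n] = (m−n) L_{m+n} + (c/12)(m³−m) δ_{m+n,0} C`;
`[L_m, X(n)] = −n X(m+n) + (k₀/2) m² δ_{m+n,0} tr(X) C` for `X ∈ gl(N)`;
`[L_m, Y(n)] = −n Y(m+n) + (1/2) m² δ_{m+n,0} φ_g(Y) C` for `Y ∈ 𝔤`;
`[X(m), X'(n)] = (XX'−X'X)(m+n) + m δ_{m+n,0}(k₁ tr(XX') + k₂ tr(X)tr(X')) C`;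
`[Y(m), Y'(n)] = [Y,Y'](m+n) + k m δ_{m+n,0} B(Y,Y') C`;
`[X(m), Y(n)] = m δ_{m+n,0} tr(X) φ_{g'}(Y) C` for `X ∈ gl(N)`, `Y ∈ 𝔤`;
`[C, ·] = 0`. -/
noncomputable def curVirBracket (N : ℕ) (𝔤 : Type*) [LieRing 𝔤] [LieAlgebra ℝ 𝔤]
    (B : 𝔤 →ₗ[ℝ] 𝔤 →ₗ[ℝ] ℝ) (φg φg' : 𝔤 →ₗ[ℝ] ℝ) (c k0 k1 k2 k : ℝ)
    (x y : CurVir N 𝔤) : CurVir N 𝔤 :=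
  ⟨x.1.sum fun m a => y.1.sum fun n b =>
      Finsupp.single (m + n) (a * b * ((m : ℝ) - (n : ℝ))),
   (x.1.sum fun m a => y.2.1.sum fun n X =>
        Finsupp.single (m + n) ((a * (-(n : ℝ))) • X))
    + (x.2.1.sum fun m X => y.1.sum fun n b =>
        Finsupp.single (m + n) ((b * (m : ℝ)) • X))
    + (x.2.1.sum fun m X => y.2.1.sum fun n X' =>
        Finsupp.single (m + n) (X * X' - X' * X)),
   (x.1.sum fun m a => y.2.2.1.sum fun n Y =>
        Finsupp.single (m + n) ((a * (-(n : ℝ))) • Y))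
    + (x.2.2.1.sum fun m Y => y.1.sum fun n b =>
        Finsupp.single (m + n) ((b * (m : ℝ)) • Y))
    + (x.2.2.1.sum fun m Y => y.2.2.1.sum fun n Y' => Finsupp.single (m + n) ⁅Y, Y'⁆),
   (x.1.sum fun m a => a * y.1 (-m) * (c / 12) * ((m : ℝ) ^ 3 - (m : ℝ)))
    + ((x.1.sum fun m a => a * (k0 / 2) * (m : ℝ) ^ 2 * (y.2.1 (-m)).trace)
        - (y.1.sum fun n b => b * (k0 / 2) * (n : ℝ) ^ 2 * (x.2.1 (-n)).trace))
    + ((x.1.sum fun m a => a * (1 / 2) * (m : ℝ) ^ 2 * φg (y.2.2.1 (-m)))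
        - (y.1.sum fun n b => b * (1 / 2) * (n : ℝ) ^ 2 * φg (x.2.2.1 (-n))))
    + (x.2.1.sum fun m X =>
        (m : ℝ) * (k1 * (X * y.2.1 (-m)).trace + k2 * X.trace * (y.2.1 (-m)).trace))
    + (x.2.2.1.sum fun m Y => k * (m : ℝ) * B Y (y.2.2.1 (-m)))
    + ((x.2.1.sum fun m X => (m : ℝ) * X.trace * φg' (y.2.2.1 (-m)))
        - (y.2.1.sum fun n X => (n : ℝ) * X.trace * φg' (x.2.2.1 (-n))))⟩

section CurVir

variable {N : ℕ} {𝔤 : Type*} [LieRing 𝔤] [LieAlgebra ℝ 𝔤]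

/-- The element `a L_m + X(m) + Y(m) + r C`. -/
noncomputable def curVirHomog (m : ℤ) (a : ℝ) (X : Matrix (Fin N) (Fin N) ℝ) (Y : 𝔤) (r : ℝ) :
    CurVir N 𝔤 :=
  ⟨Finsupp.single m a, Finsupp.single m X, Finsupp.single m Y, r⟩

/-- The elements `a L_m + X(m) + Y(m) + r C` span the current–Virasoro algebra additively. -/
theorem curVir_induction {P : CurVir N 𝔤 → Prop}
    (homog : ∀ m a X Y r, P (curVirHomog m a X Y r))
    (add : ∀ x y, P x → P y → P (x + y)) (x : CurVir N 𝔤) : P x := by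
  have zero : P (0, 0, 0, 0) := by simpa [curVirHomog] using homog 0 0 0 0 0
  obtain ⟨f, F, G, r⟩ := x
  have hf : P (f, 0, 0, 0) := by
    induction f using Finsupp.induction_linear with
    | zero => exact zero
    | add f g hf hg => simpa using add _ _ hf hg
    | single m a => simpa [curVirHomog] using homog m a 0 0 0
  have hF : P (0, F, 0, 0) := by
    induction F using Finsupp.induction_linear with
    | zero => exact zero
    | add f g hf hg => simpa using add _ _ hf hg
    | single m X => simpa [curVirHomog] using homog m 0 X 0 0
  have hG : P (0, 0, G, 0) := by
    induction G using Finsupp.induction_linear with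
    | zero => exact zero
    | add f g hf hg => simpa using add _ _ hf hg
    | single m Y => simpa [curVirHomog] using homog m 0 0 Y 0
  have hr : P (0, 0, 0, r) := by simpa [curVirHomog] using homog 0 0 0 0 r
  simpa using add _ _ (add _ _ (add _ _ hf hF) hG) hr

variable (B : 𝔤 →ₗ[ℝ] 𝔤 →ₗ[ℝ] ℝ) (φg φg' : 𝔤 →ₗ[ℝ] ℝ) (c k0 k1 k2 k : ℝ)

theorem curVirBracket_add_left (x x' y : CurVir N 𝔤) :
    curVirBracket N 𝔤 B φg φg' c k0 k1 k2 k (x + x') y =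
      curVirBracket N 𝔤 B φg φg' c k0 k1 k2 k x y +
        curVirBracket N 𝔤 B φg φg' c k0 k1 k2 k x' y := by
  simp only [curVirBracket, Prod.fst_add, Prod.snd_add, Prod.mk_add_mk]
  simp (disch := intros; first
      | (simp; done)
      | (simp only [add_mul, mul_add, add_smul, smul_add, add_lie, lie_add, Matrix.trace_add,
          map_add, LinearMap.add_apply, add_sub_add_comm, Finsupp.single_add, Finsupp.sum_add]; done)) only
    [Finsupp.sum_add_index', Finsupp.add_apply, Matrix.trace_add, map_add, mul_add,
      Finsupp.sum_add]
  refine Prod.ext rfl (Prod.ext ?_ (Prod.ext ?_ ?_))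
  · dsimp only; abel
  · dsimp only; abel
  · dsimp only; ring

theorem curVirBracket_add_right (x y y' : CurVir N 𝔤) :
    curVirBracket N 𝔤 B φg φg' c k0 k1 k2 k x (y + y') =
      curVirBracket N 𝔤 B φg φg' c k0 k1 k2 k x y +
        curVirBracket N 𝔤 B φg φg' c k0 k1 k2 k x y' := by
  simp only [curVirBracket, Prod.fst_add, Prod.snd_add, Prod.mk_add_mk]
  simp (disch := intros; first
      | (simp; done)
      | (simp only [add_mul, mul_add, add_smul, smul_add, add_lie, lie_add, Matrix.trace_add,
          map_add, LinearMap.add_apply, add_sub_add_comm, Finsupp.single_add, Finsupp.sum_add]; done)) only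
    [Finsupp.sum_add_index', Finsupp.add_apply, Matrix.trace_add, map_add, mul_add, add_mul,
      Finsupp.sum_add]
  refine Prod.ext rfl (Prod.ext ?_ (Prod.ext ?_ ?_))
  · dsimp only; abel
  · dsimp only; abel
  · dsimp only; ring

/-- The bracket of two homogeneous elements is homogeneous. -/
theorem curVirBracket_homog (m n : ℤ) (a b r s : ℝ) (X X' : Matrix (Fin N) (Fin N) ℝ) (Y Y' : 𝔤) :
    curVirBracket N 𝔤 B φg φg' c k0 k1 k2 k (curVirHomog m a X Y r) (curVirHomog n b X' Y' s) =
      curVirHomog (m + n) (a * b * (m - n))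
        ((a * -n) • X' + (b * m) • X + (X * X' - X' * X))
        ((a * -n) • Y' + (b * m) • Y + ⁅Y, Y'⁆)
        (if m + n = 0 then
          a * b * (c / 12) * (m ^ 3 - m)
            + m ^ 2 * (k0 / 2) * (a * X'.trace - b * X.trace)
            + m ^ 2 * (1 / 2) * (a * φg Y' - b * φg Y)
            + m * (k1 * (X * X').trace + k2 * X.trace * X'.trace)
            + k * m * B Y Y'
            + m * (X.trace * φg' Y' + X'.trace * φg' Y)
          else 0) := by
  by_cases h : m + n = 0
  · obtain rfl : n = -m := by omega
    simp [curVirBracket, curVirHomog, Finsupp.single_add]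
    ring
  · have h1 : n ≠ -m := by omega
    have h2 : m ≠ -n := by omega
    simp [curVirBracket, curVirHomog, Finsupp.single_add, h, h1, h2]

end CurVir

/-- The full current–Virasoro algebra `Vir_c ⋉̃_{k₀,g}( ĝl(N)_{k₁,k₂} ⊕̃_{g'} ĝ_k )`
of eqs. (3.7) and (4.4) is a Lie algebra: for a finite-dimensional real Lie algebra
`𝔤`, a symmetric invariant bilinear form `B`, and linear functionals `φ_g, φ_{g'}`
vanishing on `[𝔤,𝔤]`, the bracket above is antisymmetric and satisfies the Jacobi
identity. -/
theorem curVir_isLieAlgebra (N : ℕ) (hN : 1 ≤ N) (𝔤 : Type*) [LieRing 𝔤]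
    [LieAlgebra ℝ 𝔤] [FiniteDimensional ℝ 𝔤]
    (B : 𝔤 →ₗ[ℝ] 𝔤 →ₗ[ℝ] ℝ) (hBsymm : ∀ X Y : 𝔤, B X Y = B Y X)
    (hBinv : ∀ X Y Z : 𝔤, B ⁅X, Y⁆ Z = B X ⁅Y, Z⁆)
    (φg φg' : 𝔤 →ₗ[ℝ] ℝ)
    (hφg : ∀ X Y : 𝔤, φg ⁅X, Y⁆ = 0) (hφg' : ∀ X Y : 𝔤, φg' ⁅X, Y⁆ = 0)
    (c k0 k1 k2 k : ℝ) :
    (∀ x y : CurVir N 𝔤,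
      curVirBracket N 𝔤 B φg φg' c k0 k1 k2 k x y
        = - curVirBracket N 𝔤 B φg φg' c k0 k1 k2 k y x) ∧
    (∀ x y z : CurVir N 𝔤,
      curVirBracket N 𝔤 B φg φg' c k0 k1 k2 k
          (curVirBracket N 𝔤 B φg φg' c k0 k1 k2 k x y) z
        + curVirBracket N 𝔤 B φg φg' c k0 k1 k2 k
          (curVirBracket N 𝔤 B φg φg' c k0 k1 k2 k y z) x
        + curVirBracket N 𝔤 B φg φg' c k0 k1 k2 k
          (curVirBracket N 𝔤 B φg φg' c k0 k1 k2 k z x) y = 0) := by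
  constructor
  · intro x y
    induction x using curVir_induction with
    | add x x' hx hx' =>
      rw [curVirBracket_add_left, curVirBracket_add_right, hx, hx', neg_add]
    | homog m a X Y r =>
    induction y using curVir_induction with
    | add y y' hy hy' =>
      rw [curVirBracket_add_left, curVirBracket_add_right, hy, hy', neg_add]
    | homog n b X' Y' s =>
    simp only [curVirBracket_homog]
    simp only [curVirHomog, Prod.neg_mk, ← Finsupp.single_neg, add_comm n m]
    refine Prod.ext ?_ (Prod.ext ?_ (Prod.ext ?_ ?_)) <;> dsimp only
    · congr 1; ring
    · congr 1; module
    · congr 1; rw [← lie_skew]; module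
    · split_ifs with h
      · obtain rfl : n = -m := by omega
        rw [hBsymm Y' Y, Matrix.trace_mul_comm X' X]
        push_cast
        ring
      · simp
  · intro x y z
    induction x using curVir_induction with
    | add x x' hx hx' =>
      simp only [curVirBracket_add_left, curVirBracket_add_right]
      rw [← add_zero (0 : CurVir N 𝔤)]
      nth_rewrite 1 [← hx]
      rw [← hx']
      abel
    | homog m a X Y r =>
    induction y using curVir_induction with
    | add y y' hy hy' =>
      simp only [curVirBracket_add_left, curVirBracket_add_right]
      rw [← add_zero (0 : CurVir N 𝔤)]
      nth_rewrite 1 [← hy]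
      rw [← hy']
      abel
    | homog n b X' Y' s =>
    induction z using curVir_induction with
    | add z z' hz hz' =>
      simp only [curVirBracket_add_left, curVirBracket_add_right]
      rw [← add_zero (0 : CurVir N 𝔤)]
      nth_rewrite 1 [← hz]
      rw [← hz']
      abel
    | homog p d X'' Y'' t =>
    have h1 : n + p + m = m + n + p := by ring
    have h2 : p + m + n = m + n + p := by ring
    simp only [curVirBracket_homog]
    simp only [curVirHomog, h1, h2, Prod.mk_add_mk, ← Finsupp.single_add]
    refine Prod.ext ?_ (Prod.ext ?_ (Prod.ext ?_ ?_)) <;>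
      simp only [Prod.fst_zero, Prod.snd_zero]
    · rw [Finsupp.single_eq_zero]; push_cast; ring
    · rw [Finsupp.single_eq_zero]; push_cast
      simp only [add_mul, mul_add, sub_mul, mul_sub, smul_mul_assoc, mul_smul_comm, mul_assoc]
      module
    · rw [Finsupp.single_eq_zero]; push_cast
      simp only [add_lie, smul_lie]
      rw [← lie_skew ⁅Y, Y'⁆ Y'', ← lie_skew ⁅Y', Y''⁆ Y, ← lie_skew ⁅Y'', Y⁆ Y']
      have hJ := lie_jacobi Y Y' Y''
      rw [← lie_skew Y'' Y] at hJ ⊢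
      rw [← lie_skew Y' Y, ← lie_skew Y'' Y']
      linear_combination (norm := module) (-1 : ℝ) • hJ
    · split_ifs with h
      · obtain rfl : p = -m - n := by omega
        have hB1 : B ⁅Y', Y''⁆ Y = B ⁅Y, Y'⁆ Y'' := by rw [hBsymm, hBinv]
        have hB2 : B ⁅Y'', Y⁆ Y' = B ⁅Y, Y'⁆ Y'' := by rw [hBinv, hBsymm]
        have ht1 : (X' * (X'' * X)).trace = (X * (X' * X'')).trace := by
          rw [← mul_assoc, Matrix.trace_mul_comm]
        have ht2 : (X'' * (X * X')).trace = (X * (X' * X'')).trace := by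
          rw [Matrix.trace_mul_comm, mul_assoc]
        have ht3 : (X' * (X * X'')).trace = (X * (X'' * X')).trace := by
          rw [Matrix.trace_mul_comm, mul_assoc]
        have ht4 : (X'' * (X' * X)).trace = (X * (X'' * X')).trace := by
          rw [← mul_assoc, Matrix.trace_mul_comm]
        simp only [add_mul, sub_mul, smul_mul_assoc, mul_assoc, Matrix.trace_add, Matrix.trace_sub,
          Matrix.trace_smul, map_add, map_smul, LinearMap.add_apply, LinearMap.smul_apply,
          smul_eq_mul, hφg, hφg', hB1, hB2, ht1, ht2, ht3, ht4, Matrix.trace_mul_comm X' X,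
          Matrix.trace_mul_comm X'' X, Matrix.trace_mul_comm X'' X', hBsymm Y' Y, hBsymm Y'' Y,
          hBsymm Y'' Y']
        push_cast
        ring
      · simp
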